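/- Let G = (V,E) be a Δ-regular finite simple graph, let τ ∈ (0,1) with τ ≤ 2/Δ, let A be a set of agents with |A| < |V| partitioned into k ≥ 2 types, and consider the one-versus-all jump Schelling game (1-k-JSG). Fix any real c with 1/2 − 1/(2Δ) < c < 1/2 and, for a placement p, give each edge e = {u,v} ∈ E the weight w_p(e) = 1 if u and v are occupied by agents of different types, w_p(e) = c if exactly one of u, v is occupied, and w_p(e) = 0 otherwise. Then Φ(p) = ∑_{e∈E} w_p(e) is an ordinal potential function: Φ strictly decreases with every improving jump; consequently there is no infinite sequence of improving jumps and improving response dynamics always reach a jump-stable placement. -/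

import Mathlib

open Finset
open scoped Classical

noncomputable section

namespace Schelling

variable {V A : Type*} [Fintype V] [Fintype A] {k : ℕ}

/-- The set of neighbors of agent `a` under placement `p`. -/
def nbrs (G : SimpleGraph V) (p : A → V) (a : A) : Finset A :=
  Finset.univ.filter fun b => G.Adj (p a) (p b)

/-- `|N⁺_p(a)|`: the number of neighbors of `a` under `p` having the same type as `a`. -/
def posCount (G : SimpleGraph V) (t : A → Fin k) (p : A → V) (a : A) : ℕ :=
  (Finset.univ.filter fun b => G.Adj (p a) (p b) ∧ t b = t a).card

/-- One-versus-all `|N⁻_p(a)|`: the number of neighbors of `a` whose type differs from `t a`. -/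
def negCountAll (G : SimpleGraph V) (t : A → Fin k) (p : A → V) (a : A) : ℕ :=
  (Finset.univ.filter fun b => G.Adj (p a) (p b) ∧ t b ≠ t a).card

/-- One-versus-one `|N⁻_p(a)|`: the size of a largest set of neighbors of `a`
of one common type different from `t a`. -/
def negCountOne (G : SimpleGraph V) (t : A → Fin k) (p : A → V) (a : A) : ℕ :=
  (Finset.univ.filter fun T : Fin k => T ≠ t a).sup fun T =>
    (Finset.univ.filter fun b => G.Adj (p a) (p b) ∧ t b = T).card

/-- The cost of agent `a` in the one-versus-all version. -/
def costAll (G : SimpleGraph V) (t : A → Fin k) (τ : ℝ) (p : A → V) (a : A) : ℝ :=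
  if nbrs G p a = ∅ then τ
  else max 0 (τ - (posCount G t p a : ℝ) /
    ((posCount G t p a : ℝ) + (negCountAll G t p a : ℝ)))

/-- The cost of agent `a` in the one-versus-one version. -/
def costOne (G : SimpleGraph V) (t : A → Fin k) (τ : ℝ) (p : A → V) (a : A) : ℝ :=
  if nbrs G p a = ∅ then τ
  else max 0 (τ - (posCount G t p a : ℝ) /
    ((posCount G t p a : ℝ) + (negCountOne G t p a : ℝ)))

/-- A swap of the (distinct) agents `a` and `b` turning placement `p` into `q`,
which strictly decreases the cost of both agents (cost function `c`). -/
def SwapMove (c : (A → V) → A → ℝ) (p q : A → V) (a b : A) : Prop :=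
  a ≠ b ∧ q = p ∘ (Equiv.swap a b) ∧ c q a < c p a ∧ c q b < c p b

/-- `q` is obtained from `p` by an improving swap. -/
def ImprovingSwap (c : (A → V) → A → ℝ) (p q : A → V) : Prop :=
  ∃ a b, SwapMove c p q a b

/-- A placement is swap-stable if it admits no improving swap. -/
def SwapStable (c : (A → V) → A → ℝ) (p : A → V) : Prop :=
  ∀ q, ¬ ImprovingSwap c p q

/-- Some finite sequence of improving swaps starting at `p₀` ends in a swap-stable placement. -/
def ReachesStableSwap (c : (A → V) → A → ℝ) (p₀ : A → V) : Prop :=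
  ∃ (n : ℕ) (q : ℕ → A → V), q 0 = p₀ ∧
    (∀ i < n, ImprovingSwap c (q i) (q (i + 1))) ∧ SwapStable c (q n)

/-- A jump of agent `a` to the node `v` (unoccupied under `p`) turning placement `p`
into `q`, which strictly decreases the cost of `a` (cost function `c`). -/
def JumpMove (c : (A → V) → A → ℝ) (p q : A → V) (a : A) (v : V) : Prop :=
  (∀ b, p b ≠ v) ∧ q = Function.update p a v ∧ c q a < c p a

/-- `q` is obtained from `p` by an improving jump. -/
def ImprovingJump (c : (A → V) → A → ℝ) (p q : A → V) : Prop :=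
  ∃ a v, JumpMove c p q a v

/-- A placement is jump-stable if it admits no improving jump. -/
def JumpStable (c : (A → V) → A → ℝ) (p : A → V) : Prop :=
  ∀ q, ¬ ImprovingJump c p q

/-- Some finite sequence of improving jumps starting at `p₀` ends in a jump-stable placement. -/
def ReachesStableJump (c : (A → V) → A → ℝ) (p₀ : A → V) : Prop :=
  ∃ (n : ℕ) (q : ℕ → A → V), q 0 = p₀ ∧
    (∀ i < n, ImprovingJump c (q i) (q (i + 1))) ∧ JumpStable c (q n)

/-- The placement cost: the number of discontent agents (one-versus-all cost). -/
def placementCost (G : SimpleGraph V) (t : A → Fin k) (τ : ℝ) (p : A → V) : ℕ :=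
  (Finset.univ.filter fun a => costAll G t τ p a ≠ 0).card

/-- A graph is `Δ`-regular if every node has exactly `Δ` neighbors. -/
def IsRegular (G : SimpleGraph V) (Δ : ℕ) : Prop :=
  ∀ v : V, (Finset.univ.filter fun u => G.Adj v u).card = Δ

/-- The type of the agent occupying node `v` under `p`, if any. -/
def typeAt (t : A → Fin k) (p : A → V) (v : V) : Option (Fin k) :=
  if h : ∃ a, p a = v then some (t h.choose) else none

/-- Weight of a pair of (possibly unoccupied) node contents: `1` for two agents of
different types, `c` if exactly one node is occupied, `0` otherwise. -/
def pairWeight (c : ℝ) (x y : Option (Fin k)) : ℝ :=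
  if x = none ∧ y = none then 0
  else if x = none ∨ y = none then c
  else if x = y then 0 else 1

lemma pairWeight_symm (c : ℝ) (x y : Option (Fin k)) :
    pairWeight c x y = pairWeight c y x := by
  unfold pairWeight
  rcases x with _ | i <;> rcases y with _ | j <;> simp [eq_comm]

/-- The weight `w_p(e)` of an edge `e = {u,v}`. -/
def edgeWeight (c : ℝ) (t : A → Fin k) (p : A → V) : Sym2 V → ℝ :=
  Sym2.lift ⟨fun u v => pairWeight c (typeAt t p u) (typeAt t p v),
    fun _ _ => pairWeight_symm c _ _⟩

/-- The potential `Φ(p) = ∑_{e ∈ E} w_p(e)`. -/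
def PhiJump (G : SimpleGraph V) (c : ℝ) (t : A → Fin k) (p : A → V) : ℝ :=
  ∑ᶠ e ∈ G.edgeSet, edgeWeight c t p e

/-!
Delete the jumping agent `a` from a placement `p`: on a `Δ`-regular graph `Φ` drops by
`c Δ + (1 - 2c) |N(a)| - |N⁺(a)|`. A jump leaves the placement of the other agents alone, so it
lowers `Φ` exactly if it lowers `(1 - 2c) |N(a)| - |N⁺(a)|`. Before an improving jump `a` is
discontent, so `|N⁺(a)| / |N(a)| < τ ≤ 2 / Δ`, which forces `|N⁺(a)| ≤ 1`. Hence either `a` gains a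
neighbor of its own type, which outweighs any change of `|N(a)|` because `(1 - 2c) Δ < 1`, or
`|N⁺(a)|` remains `1` and `|N(a)|` decreases.
-/

section Graph

theorem sum_edgeFinset_sub_sum_edgeFinset {M : Type*} [AddCommGroup M] (G : SimpleGraph V) (v : V)
    {f g : Sym2 V → M} (hfg : ∀ e, v ∉ e → f e = g e) :
    ∑ e ∈ G.edgeFinset, f e - ∑ e ∈ G.edgeFinset, g e =
      ∑ w ∈ G.neighborFinset v, (f s(v, w) - g s(v, w)) := by
  rw [← sum_sub_distrib]
  refine (sum_of_injOn (fun w ↦ s(v, w)) (fun _ _ _ _ ↦ Sym2.congr_right.mp)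
    (fun w hw ↦ by simpa using hw) (fun e he hv ↦ sub_eq_zero.mpr (hfg e ?_))
    fun _ _ ↦ rfl).symm
  rintro ⟨w, rfl⟩
  exact hv ⟨w, by simpa using he, rfl⟩

theorem IsRegular.degree_eq {G : SimpleGraph V} {Δ : ℕ} (hG : IsRegular G Δ) (v : V) :
    G.degree v = Δ := by
  rw [← hG v, ← G.card_neighborFinset_eq_degree, G.neighborFinset_eq_filter]

theorem card_nbrs_le_degree (G : SimpleGraph V) {p : A → V} (hp : p.Injective) (a : A) :
    #(nbrs G p a) ≤ G.degree (p a) := by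
  rw [← G.card_neighborFinset_eq_degree]
  refine card_le_card_of_injOn p (fun b hb ↦ ?_) hp.injOn
  simpa [nbrs] using hb

end Graph

section TypeAt

omit [Fintype V]

theorem typeAt_eq_some_iff {t : A → Fin k} {p : A → V} (hp : p.Injective) {v : V} {T : Fin k} :
    typeAt t p v = some T ↔ ∃ b, p b = v ∧ t b = T := by
  unfold typeAt
  split_ifs with h
  · rw [Option.some_inj]
    refine ⟨fun hT ↦ ⟨_, h.choose_spec, hT⟩, ?_⟩
    rintro ⟨b, hb, rfl⟩
    rw [hp (h.choose_spec.trans hb.symm)]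
  · simp only [false_iff]
    exact fun ⟨b, hb, _⟩ ↦ h ⟨b, hb⟩

theorem typeAt_apply (t : A → Fin k) {p : A → V} (hp : p.Injective) (a : A) :
    typeAt t p (p a) = some (t a) :=
  (typeAt_eq_some_iff hp).mpr ⟨a, rfl, rfl⟩

theorem typeAt_of_notMem_range (t : A → Fin k) {p : A → V} {v : V} (hv : v ∉ Set.range p) :
    typeAt t p v = none :=
  dif_neg hv

theorem typeAt_domRestrict_compl_singleton_self (t : A → Fin k) {p : A → V} (hp : p.Injective)
    (a : A) : typeAt (Set.domRestrict {a}ᶜ t) (Set.domRestrict {a}ᶜ p) (p a) = none := by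
  refine typeAt_of_notMem_range _ ?_
  rintro ⟨b, hb⟩
  exact b.2 (hp hb)

theorem typeAt_domRestrict_compl_singleton_of_ne (t : A → Fin k) {p : A → V} (hp : p.Injective)
    {a : A} {v : V} (hv : v ≠ p a) :
    typeAt (Set.domRestrict {a}ᶜ t) (Set.domRestrict {a}ᶜ p) v = typeAt t p v := by
  have hp' : (Set.domRestrict {a}ᶜ p).Injective := hp.comp Subtype.val_injective
  ext T
  rw [typeAt_eq_some_iff hp, typeAt_eq_some_iff hp']
  constructor
  · rintro ⟨b, hb⟩
    exact ⟨b, hb⟩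
  · rintro ⟨b, rfl, hT⟩
    exact ⟨⟨b, fun hba ↦ hv (congrArg p hba)⟩, rfl, hT⟩

end TypeAt

section Potential

theorem sum_neighborFinset_typeAt {M : Type*} [AddCommMonoid M] (G : SimpleGraph V)
    (t : A → Fin k) {p : A → V} (hp : p.Injective) (a : A) {f : Option (Fin k) → M}
    (hf : f none = 0) :
    ∑ w ∈ G.neighborFinset (p a), f (typeAt t p w) = ∑ b ∈ nbrs G p a, f (some (t b)) := by
  refine (sum_of_injOn p hp.injOn (fun b hb ↦ by simpa [nbrs] using hb) (fun w hw hwp ↦ ?_)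
    fun b _ ↦ by rw [typeAt_apply t hp]).symm
  rw [typeAt_of_notMem_range, hf]
  rintro ⟨b, rfl⟩
  exact hwp ⟨b, by simpa [nbrs] using hw, rfl⟩

omit [Fintype V] in
theorem sum_nbrs_ite_type_eq (G : SimpleGraph V) (t : A → Fin k) (p : A → V) (a : A) :
    ∑ b ∈ nbrs G p a, (if t b = t a then (1 : ℝ) else 0) = posCount G t p a := by
  rw [sum_boole, nbrs, filter_filter, posCount]

theorem PhiJump_eq_sum_edgeFinset (G : SimpleGraph V) (c : ℝ) (t : A → Fin k) (p : A → V) :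
    PhiJump G c t p = ∑ e ∈ G.edgeFinset, edgeWeight c t p e :=
  finsum_mem_eq_toFinset_sum _ _

theorem PhiJump_sub_PhiJump_domRestrict_compl_singleton (G : SimpleGraph V) (c : ℝ)
    (t : A → Fin k) {p : A → V} (hp : p.Injective) (a : A) :
    PhiJump G c t p - PhiJump G c (Set.domRestrict {a}ᶜ t) (Set.domRestrict {a}ᶜ p) =
      ∑ w ∈ G.neighborFinset (p a),
        (pairWeight c (some (t a)) (typeAt t p w) - pairWeight c none (typeAt t p w)) := by
  rw [PhiJump_eq_sum_edgeFinset, PhiJump_eq_sum_edgeFinset,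
    sum_edgeFinset_sub_sum_edgeFinset G (p a)]
  · refine sum_congr rfl fun w hw ↦ ?_
    have hw : w ≠ p a := ((G.mem_neighborFinset _ _).mp hw).ne'
    simp only [edgeWeight, Sym2.lift_mk, typeAt_apply t hp,
      typeAt_domRestrict_compl_singleton_self t hp,
      typeAt_domRestrict_compl_singleton_of_ne t hp hw]
  · rintro ⟨x, y⟩ hxy
    obtain ⟨hx, hy⟩ : p a ≠ x ∧ p a ≠ y := by simpa using hxy
    simp only [edgeWeight, Sym2.lift_mk,
      typeAt_domRestrict_compl_singleton_of_ne t hp hx.symm,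
      typeAt_domRestrict_compl_singleton_of_ne t hp hy.symm]

theorem PhiJump_eq_PhiJump_domRestrict_compl_singleton_add (G : SimpleGraph V) (c : ℝ)
    (t : A → Fin k) {p : A → V} (hp : p.Injective) (a : A) :
    PhiJump G c t p = PhiJump G c (Set.domRestrict {a}ᶜ t) (Set.domRestrict {a}ᶜ p) +
      (c * G.degree (p a) + ((1 - 2 * c) * #(nbrs G p a) - posCount G t p a)) := by
  rw [← sub_eq_iff_eq_add', PhiJump_sub_PhiJump_domRestrict_compl_singleton G c t hp]
  let excess (x : Option (Fin k)) : ℝ := pairWeight c (some (t a)) x - pairWeight c none x - c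
  have excess_none : excess none = 0 := by simp [excess, pairWeight]
  have excess_some (b : A) :
      excess (some (t b)) = (1 - 2 * c) - if t b = t a then 1 else 0 := by
    by_cases hb : t b = t a
    · simp [excess, pairWeight, hb]
      ring
    · simp [excess, pairWeight, hb, Ne.symm hb]
      ring
  calc ∑ w ∈ G.neighborFinset (p a),
        (pairWeight c (some (t a)) (typeAt t p w) - pairWeight c none (typeAt t p w))
      = ∑ w ∈ G.neighborFinset (p a), (c + excess (typeAt t p w)) := by
        simp only [excess, add_sub_cancel]
    _ = c * G.degree (p a) + ∑ b ∈ nbrs G p a, ((1 - 2 * c) - if t b = t a then 1 else 0) := by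
        rw [sum_add_distrib, sum_neighborFinset_typeAt G t hp a excess_none, sum_const,
          nsmul_eq_mul, mul_comm, G.card_neighborFinset_eq_degree]
        simp only [excess_some]
    _ = c * G.degree (p a) + ((1 - 2 * c) * #(nbrs G p a) - posCount G t p a) := by
        rw [sum_sub_distrib, sum_nbrs_ite_type_eq, sum_const, nsmul_eq_mul,
          mul_comm (#(nbrs G p a) : ℝ)]

end Potential

section Cost

omit [Fintype V]

theorem posCount_add_negCountAll (G : SimpleGraph V) (t : A → Fin k) (p : A → V) (a : A) :
    posCount G t p a + negCountAll G t p a = #(nbrs G p a) := by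
  rw [posCount, negCountAll, ← filter_filter, ← filter_filter, card_filter_add_card_filter_not,
    nbrs]

theorem posCount_le_card_nbrs (G : SimpleGraph V) (t : A → Fin k) (p : A → V) (a : A) :
    posCount G t p a ≤ #(nbrs G p a) :=
  Nat.le.intro (posCount_add_negCountAll G t p a)

-- An isolated agent is covered because `0 / 0 = 0`.
theorem costAll_eq_max (G : SimpleGraph V) (t : A → Fin k) {τ : ℝ} (hτ : 0 ≤ τ) (p : A → V)
    (a : A) : costAll G t τ p a = max 0 (τ - posCount G t p a / #(nbrs G p a)) := by
  unfold costAll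
  split_ifs with h
  · simp [h, hτ]
  · rw [← posCount_add_negCountAll G t, Nat.cast_add]

theorem costAll_lt_costAll_iff (G : SimpleGraph V) (t : A → Fin k) {τ : ℝ} (hτ : 0 ≤ τ)
    (p q : A → V) (a : A) :
    costAll G t τ q a < costAll G t τ p a ↔
      (posCount G t p a / #(nbrs G p a) : ℝ) < posCount G t q a / #(nbrs G q a) ∧
        (posCount G t p a / #(nbrs G p a) : ℝ) < τ := by
  rw [costAll_eq_max G t hτ, costAll_eq_max G t hτ, max_lt_max_right_iff, sub_lt_sub_iff_left,
    sub_pos]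

end Cost

section Arithmetic

theorem lt_of_div_lt_div_of_le {x n m d : ℝ} (hm : 0 < m) (hxn : x ≤ n) (hnd : n ≤ d)
    (h : x / n < m / d) : x < m := by
  by_contra! hmx
  exact h.not_ge (div_le_div₀ (hm.le.trans hmx) hmx (hm.trans_le (hmx.trans hxn)) hnd)

theorem lt_or_eq_and_lt_of_div_lt_div {x n x' n' : ℕ} (hx : x ≤ 1) (hxn : x ≤ n)
    (h : (x / n : ℝ) < x' / n') : x < x' ∨ x = x' ∧ n' < n := by
  have hpos : (0 : ℝ) < x' / n' := lt_of_le_of_lt (by positivity) h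
  have hx' : x' ≠ 0 := by
    rintro rfl
    simp at hpos
  have hn' : n' ≠ 0 := by
    rintro rfl
    simp at hpos
  refine (lt_or_ge x x').imp_right fun hle ↦ ?_
  obtain ⟨rfl, rfl⟩ : x = 1 ∧ x' = 1 := by lia
  refine ⟨rfl, ?_⟩
  rw [Nat.cast_one, one_div_lt_one_div (by positivity) (by positivity)] at h
  exact_mod_cast h

theorem one_sub_two_mul_mul_lt_one {c d : ℝ} (hd : 0 ≤ d) (hc : 1 / 2 - 1 / (2 * d) < c) :
    (1 - 2 * c) * d < 1 := by
  obtain rfl | hd := hd.eq_or_lt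
  · simp
  · calc (1 - 2 * c) * d < (1 / d) * d := by
          gcongr
          have : 1 / (2 * d) = 1 / d / 2 := by ring
          linarith
      _ = 1 := one_div_mul_cancel hd.ne'

theorem mul_sub_lt_mul_sub_of_lt_or_eq_and_lt {x n x' n' : ℕ} {r d : ℝ} (hr : 0 < r)
    (hrd : r * d < 1) (hn' : n' ≤ d) (h : x < x' ∨ x = x' ∧ n' < n) :
    r * n' - x' < r * n - x := by
  rcases h with hx | ⟨rfl, hn⟩
  · have hx : (x + 1 : ℝ) ≤ x' := by exact_mod_cast hx
    calc r * n' - x' ≤ r * d - x' := by gcongr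
      _ < 1 - x' := by gcongr
      _ ≤ r * n - x := by linarith [show 0 ≤ r * n by positivity]
  · gcongr

end Arithmetic

section Jump

omit [Fintype V] [Fintype A] in
theorem ImprovingJump.injective {cost : (A → V) → A → ℝ} {p q : A → V}
    (h : ImprovingJump cost p q) (hp : p.Injective) : q.Injective := by
  obtain ⟨a, v, hv, rfl, -⟩ := h
  grind [Function.update_apply, Function.Injective]

theorem PhiJump_lt_of_improvingJump {G : SimpleGraph V} {Δ : ℕ} (hG : IsRegular G Δ)
    {t : A → Fin k} {τ : ℝ} (hτ : 0 < τ) (hτΔ : τ ≤ 2 / Δ) {c : ℝ}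
    (hc : 1 / 2 - 1 / (2 * (Δ : ℝ)) < c) (hc' : c < 1 / 2) {p q : A → V} (hp : p.Injective)
    (h : ImprovingJump (costAll G t τ) p q) : PhiJump G c t q < PhiJump G c t p := by
  have hq := h.injective hp
  obtain ⟨a, v, -, hpq, hcost⟩ := h
  obtain ⟨hratio, hτa⟩ := (costAll_lt_costAll_iff G t hτ.le p q a).mp hcost
  have hothers : Set.domRestrict {a}ᶜ q = Set.domRestrict {a}ᶜ p := by
    rw [hpq]
    exact funext fun b ↦ Function.update_of_ne b.2 _ _
  have card_nbrs_le {r : A → V} (hr : r.Injective) : #(nbrs G r a) ≤ Δ :=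
    (card_nbrs_le_degree G hr a).trans_eq (hG.degree_eq _)
  have hpos : posCount G t p a < 2 := by
    exact_mod_cast lt_of_div_lt_div_of_le (by norm_num)
      (Nat.cast_le.mpr (posCount_le_card_nbrs G t p a)) (Nat.cast_le.mpr (card_nbrs_le hp))
      (hτa.trans_le hτΔ)
  have hgain := lt_or_eq_and_lt_of_div_lt_div (Nat.le_of_lt_succ hpos)
    (posCount_le_card_nbrs G t p a) hratio
  rw [PhiJump_eq_PhiJump_domRestrict_compl_singleton_add G c t hp a,
    PhiJump_eq_PhiJump_domRestrict_compl_singleton_add G c t hq a, hothers, hG.degree_eq,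
    hG.degree_eq]
  gcongr _ + (_ + ?_)
  exact mul_sub_lt_mul_sub_of_lt_or_eq_and_lt (by linarith)
    (one_sub_two_mul_mul_lt_one Δ.cast_nonneg hc) (Nat.cast_le.mpr (card_nbrs_le hq)) hgain

end Jump

section Termination

omit [Fintype V] [Fintype A]

theorem wellFounded_of_forall_lt {α β : Type*} [Finite α] [Preorder β] {r : α → α → Prop}
    (φ : α → β) (h : ∀ x y, r x y → φ x < φ y) : WellFounded r :=
  letI := Preorder.lift φ
  Subrelation.wf (h _ _) (wellFounded_lt (α := α))

variable {cost : (A → V) → A → ℝ}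

theorem ReachesStableJump.of_improvingJump {p q : A → V} (hpq : ImprovingJump cost p q)
    (hq : ReachesStableJump cost q) : ReachesStableJump cost p := by
  obtain ⟨n, s, rfl, hs, hstable⟩ := hq
  refine ⟨n + 1, fun | 0 => p | i + 1 => s i, rfl, ?_, hstable⟩
  rintro (_ | i) hi
  · exact hpq
  · exact hs i (Nat.lt_of_succ_lt_succ hi)

theorem not_exists_forall_improvingJump_of_wellFounded
    (hwf : WellFounded fun q p : A → V ↦ p.Injective ∧ ImprovingJump cost p q) :
    ¬ ∃ s : ℕ → A → V, (s 0).Injective ∧ ∀ i, ImprovingJump cost (s i) (s (i + 1)) := by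
  rintro ⟨s, h0, hs⟩
  have hinj (i : ℕ) : (s i).Injective := by
    induction i with
    | zero => exact h0
    | succ i ih => exact (hs i).injective ih
  exact (wellFounded_iff_isEmpty_descending_chain.mp hwf).false ⟨s, fun i ↦ ⟨hinj i, hs i⟩⟩

theorem reachesStableJump_of_wellFounded
    (hwf : WellFounded fun q p : A → V ↦ p.Injective ∧ ImprovingJump cost p q) (p : A → V)
    (hp : p.Injective) : ReachesStableJump cost p := by
  induction p using hwf.induction with
  | _ p ih =>
    by_cases hstable : JumpStable cost p
    · exact ⟨0, fun _ ↦ p, rfl, by simp, hstable⟩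
    · obtain ⟨q, hpq⟩ : ∃ q, ImprovingJump cost p q := by simpa [JumpStable] using hstable
      exact .of_improvingJump hpq (ih q ⟨hp, hpq⟩ (hpq.injective hp))

end Termination

/-- On a `Δ`-regular graph, for the `1`-`k`-JSG with `τ ≤ 2/Δ` and the given edge weights
(`1/2 − 1/(2Δ) < c < 1/2`), `Φ(p) = ∑_{e ∈ E} w_p(e)` strictly decreases with every
improving jump; consequently there is no infinite sequence of improving jumps, and IRD
always reach a jump-stable placement. -/
theorem statement6 {V A : Type*} [Fintype V] [Fintype A] {k : ℕ}
    (G : SimpleGraph V) (Δ : ℕ) (hreg : IsRegular G Δ)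
    (hk : 2 ≤ k) (t : A → Fin k) (ht : Function.Surjective t)
    (hcard : Fintype.card A < Fintype.card V)
    (τ : ℝ) (hτ0 : 0 < τ) (hτ1 : τ < 1) (hτΔ : τ ≤ 2 / (Δ : ℝ))
    (c : ℝ) (hc1 : 1 / 2 - 1 / (2 * (Δ : ℝ)) < c) (hc2 : c < 1 / 2) :
    (∀ p q : A → V, Function.Injective p → ImprovingJump (costAll G t τ) p q →
        PhiJump G c t q < PhiJump G c t p) ∧
    (¬ ∃ seq : ℕ → A → V, Function.Injective (seq 0) ∧
        ∀ i : ℕ, ImprovingJump (costAll G t τ) (seq i) (seq (i + 1))) ∧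
    (∀ p₀ : A → V, Function.Injective p₀ → ReachesStableJump (costAll G t τ) p₀) := by
  have hΦ (p q : A → V) (hp : Function.Injective p) (hpq : ImprovingJump (costAll G t τ) p q) :
      PhiJump G c t q < PhiJump G c t p :=
    PhiJump_lt_of_improvingJump hreg hτ0 hτΔ hc1 hc2 hp hpq
  have hwf : WellFounded fun q p : A → V ↦
      Function.Injective p ∧ ImprovingJump (costAll G t τ) p q :=
    wellFounded_of_forall_lt (PhiJump G c t) fun q p h ↦ hΦ p q h.1 h.2
  exact ⟨hΦ, not_exists_forall_improvingJump_of_wellFounded hwf,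
    reachesStableJump_of_wellFounded hwf⟩

end Schelling
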